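/- Let k ≥ 2 be a natural number and let S ⊆ ℕ be a k-automatic set whose lower density is α and whose upper density is β. Then either (α, β) ∈ {(0,0), (1,1)}, or α and β are rational numbers with 0 < α ≤ β < 1. -/

import Mathlib

open Filter

/-- A sequence `h : ℕ → Δ` is `k`-automatic if there is a DFAO (finite state set `Q`,
initial state `q₀`, transition function `δ`, output function `τ`) computing `h n` by
reading the base-`k` digits of `n` from the most significant digit to the least. -/
def IsAutomaticSeq {Δ : Type*} (k : ℕ) (h : ℕ → Δ) : Prop :=
  ∃ (Q : Type) (_ : Fintype Q) (q₀ : Q) (δ : Q → ℕ → Q) (τ : Q → Δ),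
    ∀ n : ℕ, h n = τ (((Nat.digits k n).reverse).foldl δ q₀)

/-- A set `S ⊆ ℕ` is `k`-automatic if its characteristic function is `k`-automatic. -/
def IsAutomaticSet (k : ℕ) (S : Set ℕ) : Prop :=
  IsAutomaticSeq k (S.indicator fun _ => (1 : ℕ))

/-- `piCount S N` is the number of elements of `S` that are less than `N`. -/
noncomputable def piCount (S : Set ℕ) (N : ℕ) : ℕ := (S ∩ Set.Iio N).ncard

/-!
Let `P` replace a sequence by its averages over consecutive blocks of length `K`, a suitable power
of `k`. On the finite-dimensional space of rational sequences that depend only on the automaton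
state, `P` acts, and coboundaries `P u - u` average out uniformly over long blocks: a near-maximal
long average would force near-maximal values at all states met, against telescoping. Hence a fixed
point of `P` is a coboundary only if it vanishes, and by a dimension count the given sequence is a
fixed point `ρ` plus a coboundary, so its prefix means are asymptotic to those of `ρ`.

The prefix means of `ρ` are invariant under `n ↦ K * n`. Convergence along the powers of `K` makes
the lower and upper densities vanish together, and the upper density `β` is the supremum of these
means. Among the leading base-`K` segments `p` of a near-maximizer, two share a state; exchanging
them cannot increase the mean much, so `∑ j < p, ρ j - β * p` nearly agrees at both, and exactly
for some pair since only finitely many pairs matter. This linear equation makes `β` rational.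
Passing to the complement gives the same for the lower density.
-/

open Finset Function Topology

section BlockAverages

theorem sum_range_mul {M : Type*} [AddCommMonoid M] (f : ℕ → M) (m n : ℕ) :
    ∑ i ∈ range (m * n), f i = ∑ a ∈ range m, ∑ b ∈ range n, f (n * a + b) := by
  induction m with
  | zero => simp
  | succ m ih => rw [Nat.succ_mul, sum_range_add, ih, sum_range_succ, mul_comm m n]

/-- The operator replacing a sequence by its averages over consecutive blocks of length `K`:
the value at `n` is the average over `K * n ≤ j < K * (n + 1)`. -/
def blockAvg (𝕜 : Type*) [Field 𝕜] (K : ℕ) : (ℕ → 𝕜) →ₗ[𝕜] (ℕ → 𝕜) where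
  toFun f n := (∑ b ∈ range K, f (K * n + b)) / K
  map_add' f g := by
    funext n
    simp only [Pi.add_apply, sum_add_distrib, add_div]
  map_smul' c f := by
    funext n
    simp only [Pi.smul_apply, smul_eq_mul, ← mul_sum, mul_div_assoc, RingHom.id_apply]

section Field

variable {𝕜 : Type*} [Field 𝕜]

theorem blockAvg_apply (K : ℕ) (f : ℕ → 𝕜) (n : ℕ) :
    blockAvg 𝕜 K f n = (∑ b ∈ range K, f (K * n + b)) / K := rfl

theorem blockAvg_one (f : ℕ → 𝕜) : blockAvg 𝕜 1 f = f := by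
  funext n
  simp [blockAvg_apply]

theorem blockAvg_blockAvg (K L : ℕ) (f : ℕ → 𝕜) :
    blockAvg 𝕜 K (blockAvg 𝕜 L f) = blockAvg 𝕜 (K * L) f := by
  funext n
  simp only [blockAvg_apply, sum_range_mul _ K L, ← sum_div, div_div, Nat.cast_mul,
    mul_comm (L : 𝕜), mul_add, mul_assoc, mul_left_comm L, add_assoc]

theorem blockAvg_pow_eq_self {K : ℕ} {f : ℕ → 𝕜} (hf : blockAvg 𝕜 K f = f) (m : ℕ) :
    blockAvg 𝕜 (K ^ m) f = f := by
  induction m with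
  | zero => rw [pow_zero, blockAvg_one]
  | succ m ih => rw [pow_succ, ← blockAvg_blockAvg, hf, ih]

theorem sum_range_mul_eq_mul_sum_blockAvg [CharZero 𝕜] {K : ℕ} (hK : K ≠ 0) (f : ℕ → 𝕜) (n : ℕ) :
    ∑ j ∈ range (n * K), f j = K * ∑ j ∈ range n, blockAvg 𝕜 K f j := by
  simp only [sum_range_mul, blockAvg_apply, ← sum_div]
  exact (mul_div_cancel₀ _ (Nat.cast_ne_zero.2 hK)).symm

end Field

theorem blockAvg_ratCast (K : ℕ) (f : ℕ → ℚ) :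
    blockAvg ℝ K (fun n => (f n : ℝ)) = fun n => ((blockAvg ℚ K f n : ℚ) : ℝ) := by
  funext n
  simp [blockAvg_apply]

variable {K : ℕ} {f : ℕ → ℝ} {n : ℕ} {C : ℝ}

theorem blockAvg_le (hK : 0 < K) (hf : ∀ b < K, f (K * n + b) ≤ C) : blockAvg ℝ K f n ≤ C := by
  rw [blockAvg_apply, div_le_iff₀ (by positivity), mul_comm C]
  simpa using sum_le_card_nsmul (range K) _ C fun b hb => hf b (mem_range.1 hb)

theorem le_blockAvg (hK : 0 < K) (hf : ∀ b < K, C ≤ f (K * n + b)) : C ≤ blockAvg ℝ K f n := by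
  have h := blockAvg_le (f := -f) hK fun b hb => neg_le_neg (hf b hb)
  rwa [map_neg, Pi.neg_apply, neg_le_neg_iff] at h

theorem abs_blockAvg_le (hK : 0 < K) (hf : ∀ j, |f j| ≤ C) : |blockAvg ℝ K f n| ≤ C :=
  abs_le.2 ⟨le_blockAvg hK fun _ _ => (abs_le.1 (hf _)).1,
    blockAvg_le hK fun _ _ => (abs_le.1 (hf _)).2⟩

theorem sub_mul_le_of_sub_le_blockAvg (hf : ∀ j, f j ≤ C) {η : ℝ}
    (h : C - η ≤ blockAvg ℝ K f n) {b : ℕ} (hb : b < K) : C - K * η ≤ f (K * n + b) := by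
  have hK : (0 : ℝ) < K := by exact_mod_cast (Nat.zero_le b).trans_lt hb
  have hsingle : C - f (K * n + b) ≤ ∑ c ∈ range K, (C - f (K * n + c)) :=
    single_le_sum (f := fun c => C - f (K * n + c)) (fun c _ => sub_nonneg.2 (hf _))
      (mem_range.2 hb)
  rw [blockAvg_apply, le_div_iff₀ hK] at h
  rw [sum_sub_distrib, sum_const, card_range, nsmul_eq_mul] at hsingle
  linarith

end BlockAverages

section PrefixMeans

/-- The average of the first `N` terms of a sequence; it is `0` for `N = 0`. -/
noncomputable def prefixMean (f : ℕ → ℝ) (N : ℕ) : ℝ := (∑ j ∈ range N, f j) / N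

theorem prefixMean_mul_self (f : ℕ → ℝ) (N : ℕ) : prefixMean f N * N = ∑ j ∈ range N, f j :=
  div_mul_cancel_of_imp fun h => by simp [Nat.cast_eq_zero.1 h]

theorem prefixMean_sub (f g : ℕ → ℝ) (N : ℕ) :
    prefixMean (f - g) N = prefixMean f N - prefixMean g N := by
  simp only [prefixMean, Pi.sub_apply, sum_sub_distrib, sub_div]

theorem prefixMean_one_sub (f : ℕ → ℝ) {N : ℕ} (hN : N ≠ 0) :
    prefixMean (1 - f) N = 1 - prefixMean f N := by
  rw [prefixMean_sub]
  simp [prefixMean, hN]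

theorem prefixMean_nonneg {f : ℕ → ℝ} (hf : ∀ j, 0 ≤ f j) (N : ℕ) : 0 ≤ prefixMean f N :=
  div_nonneg (sum_nonneg fun j _ => hf j) N.cast_nonneg

theorem abs_prefixMean_le {f : ℕ → ℝ} {B : ℝ} (hf : ∀ j, |f j| ≤ B) (N : ℕ) :
    |prefixMean f N| ≤ B := by
  rcases N.eq_zero_or_pos with rfl | hN
  · simpa [prefixMean] using (abs_nonneg _).trans (hf 0)
  · rw [prefixMean, abs_div, Nat.abs_cast, div_le_iff₀ (by positivity), mul_comm]
    refine (abs_sum_le_sum_abs _ _).trans ?_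
    simpa using sum_le_card_nsmul (range N) _ B fun j _ => hf j

theorem isBoundedUnder_le_prefixMean {f : ℕ → ℝ} {B : ℝ} (hf : ∀ j, |f j| ≤ B) :
    IsBoundedUnder (· ≤ ·) atTop (prefixMean f) :=
  isBoundedUnder_of ⟨B, fun N => (abs_le.1 (abs_prefixMean_le hf N)).2⟩

theorem isBoundedUnder_ge_prefixMean {f : ℕ → ℝ} {B : ℝ} (hf : ∀ j, |f j| ≤ B) :
    IsBoundedUnder (· ≥ ·) atTop (prefixMean f) :=
  isBoundedUnder_of ⟨-B, fun N => (abs_le.1 (abs_prefixMean_le hf N)).1⟩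

theorem limsup_prefixMean_one_sub {f : ℕ → ℝ} {B : ℝ} (hf : ∀ j, |f j| ≤ B) :
    limsup (prefixMean (1 - f)) atTop = 1 - liminf (prefixMean f) atTop := by
  rw [← limsup_const_sub atTop _ _ (isBoundedUnder_le_prefixMean hf).isCoboundedUnder_ge
    (isBoundedUnder_ge_prefixMean hf)]
  exact limsup_congr ((eventually_ne_atTop 0).mono fun N => prefixMean_one_sub f)

theorem liminf_prefixMean_one_sub {f : ℕ → ℝ} {B : ℝ} (hf : ∀ j, |f j| ≤ B) :
    liminf (prefixMean (1 - f)) atTop = 1 - limsup (prefixMean f) atTop := by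
  rw [← liminf_const_sub atTop _ _ (isBoundedUnder_le_prefixMean hf)
    (isBoundedUnder_ge_prefixMean hf).isCoboundedUnder_le]
  exact liminf_congr ((eventually_ne_atTop 0).mono fun N => prefixMean_one_sub f)

theorem liminf_prefixMean_nonneg {f : ℕ → ℝ} (hf : ∀ j, 0 ≤ f j) {B : ℝ} (hB : ∀ j, |f j| ≤ B) :
    0 ≤ liminf (prefixMean f) atTop :=
  le_liminf_of_le (isBoundedUnder_le_prefixMean hB).isCoboundedUnder_ge
    (Eventually.of_forall (prefixMean_nonneg hf))

theorem liminf_prefixMean_le_limsup {f : ℕ → ℝ} {B : ℝ} (hf : ∀ j, |f j| ≤ B) :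
    liminf (prefixMean f) atTop ≤ limsup (prefixMean f) atTop :=
  liminf_le_limsup (isBoundedUnder_le_prefixMean hf) (isBoundedUnder_ge_prefixMean hf)

theorem prefixMean_mul_left {K : ℕ} (hK : K ≠ 0) {f : ℕ → ℝ} (hf : blockAvg ℝ K f = f) (n : ℕ) :
    prefixMean f (K * n) = prefixMean f n := by
  have hK' : (K : ℝ) ≠ 0 := Nat.cast_ne_zero.2 hK
  rw [prefixMean, mul_comm K n, sum_range_mul_eq_mul_sum_blockAvg hK, hf, mul_comm n K,
    Nat.cast_mul, mul_div_mul_left _ _ hK', prefixMean]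

theorem abs_sum_range_le_of_abs_blockAvg_le {f : ℕ → ℝ} {B ε : ℝ} (hf : ∀ j, |f j| ≤ B) {K : ℕ}
    (hK : 0 < K) (hε : ∀ n, |blockAvg ℝ K f n| ≤ ε) (N : ℕ) :
    |∑ j ∈ range N, f j| ≤ ε * N + B * K := by
  have hε0 : 0 ≤ ε := (abs_nonneg _).trans (hε 0)
  have hB0 : 0 ≤ B := (abs_nonneg _).trans (hf 0)
  have hblocks : |∑ j ∈ range (N / K * K), f j| ≤ ε * N := by
    rw [sum_range_mul_eq_mul_sum_blockAvg hK.ne', abs_mul, Nat.abs_cast,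
      ← prefixMean_mul_self, abs_mul, Nat.abs_cast]
    calc (K : ℝ) * (|prefixMean (blockAvg ℝ K f) (N / K)| * (N / K : ℕ))
        ≤ K * (ε * (N / K : ℕ)) := by gcongr; exact abs_prefixMean_le hε _
      _ = ε * (N / K * K : ℕ) := by push_cast; ring
      _ ≤ ε * N := by gcongr; exact Nat.div_mul_le_self N K
  have htail : |∑ c ∈ range (N % K), f (N / K * K + c)| ≤ B * K := by
    rw [← prefixMean_mul_self (fun c => f (N / K * K + c)), abs_mul, Nat.abs_cast]
    gcongr
    · exact abs_prefixMean_le (fun c => hf _) _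
    · exact (Nat.mod_lt N hK).le
  rw [← Nat.div_add_mod' N K, sum_range_add, Nat.div_add_mod' N K]
  exact (abs_add_le _ _).trans (add_le_add hblocks htail)

theorem tendsto_prefixMean_zero_of_abs_blockAvg_le {f : ℕ → ℝ} {B : ℝ} (hf : ∀ j, |f j| ≤ B)
    (h : ∀ ε > 0, ∃ K > 0, ∀ n, |blockAvg ℝ K f n| ≤ ε) :
    Tendsto (prefixMean f) atTop (𝓝 0) := by
  rw [Metric.tendsto_atTop']
  intro ε hε
  obtain ⟨K, hK, hKε⟩ := h (ε / 2) (half_pos hε)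
  obtain ⟨N₀, hN₀⟩ := exists_nat_gt (B * K / (ε / 2))
  refine ⟨N₀, fun N hN => ?_⟩
  have hN0 : (0 : ℝ) < N := by exact_mod_cast (Nat.zero_le N₀).trans_lt hN
  have htail : B * K < N * (ε / 2) :=
    (div_lt_iff₀ (half_pos hε)).1 (hN₀.trans (Nat.cast_lt.2 hN))
  have hsum := abs_sum_range_le_of_abs_blockAvg_le hf hK hKε N
  rw [dist_zero_right, Real.norm_eq_abs, prefixMean, abs_div, Nat.abs_cast, div_lt_iff₀ hN0]
  linarith

theorem prefixMean_le_mul_prefixMean {f : ℕ → ℝ} (hf : ∀ j, 0 ≤ f j) {K M N : ℕ} (hMN : M ≤ N)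
    (hNM : N ≤ K * M) : prefixMean f M ≤ K * prefixMean f N := by
  rcases M.eq_zero_or_pos with rfl | hM
  · simpa [prefixMean] using mul_nonneg K.cast_nonneg (prefixMean_nonneg hf N)
  have hN : 0 < N := hM.trans_le hMN
  rw [prefixMean, prefixMean, ← mul_div_assoc, div_le_div_iff₀ (by positivity) (by positivity)]
  calc (∑ j ∈ range M, f j) * N ≤ (∑ j ∈ range N, f j) * (K * M : ℕ) := by
        gcongr <;> simp_all [sum_nonneg]
    _ = K * (∑ j ∈ range N, f j) * M := by push_cast; ring

theorem tendsto_natLog_atTop {K : ℕ} (hK : 1 < K) : Tendsto (Nat.log K) atTop atTop :=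
  tendsto_atTop.2 fun m => (eventually_ge_atTop (K ^ m)).mono fun _ => Nat.le_log_of_pow_le hK

theorem limsup_prefixMean_le_sq_mul_liminf {f : ℕ → ℝ} (hf : ∀ j, 0 ≤ f j) {B : ℝ}
    (hfB : ∀ j, |f j| ≤ B) {K : ℕ} (hK : 1 < K) {r : ℝ}
    (hr : Tendsto (fun m => prefixMean f (K ^ m)) atTop (𝓝 r)) :
    limsup (prefixMean f) atTop ≤ K ^ 2 * liminf (prefixMean f) atTop := by
  have hK0 : (0 : ℝ) < K := by positivity
  have hlower : Tendsto (fun N => prefixMean f (K ^ Nat.log K N) / K) atTop (𝓝 (r / K)) :=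
    (hr.comp (tendsto_natLog_atTop hK)).div_const _
  have hupper : Tendsto (fun N => K * prefixMean f (K ^ (Nat.log K N + 1))) atTop (𝓝 (K * r)) :=
    ((hr.comp (tendsto_add_atTop_nat 1)).comp (tendsto_natLog_atTop hK)).const_mul _
  have hlower_le : r / K ≤ liminf (prefixMean f) atTop := by
    rw [← hlower.liminf_eq]
    refine liminf_le_liminf ((eventually_ne_atTop 0).mono fun N hN => ?_)
      hlower.isBoundedUnder_ge (isBoundedUnder_le_prefixMean hfB).isCoboundedUnder_ge
    rw [div_le_iff₀' hK0]
    refine prefixMean_le_mul_prefixMean hf (Nat.pow_log_le_self K hN) ?_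
    rw [← pow_succ']
    exact (Nat.lt_pow_succ_log_self hK N).le
  have hle_upper : limsup (prefixMean f) atTop ≤ K * r := by
    rw [← hupper.limsup_eq]
    refine limsup_le_limsup ((eventually_ne_atTop 0).mono fun N hN => ?_)
      (isBoundedUnder_ge_prefixMean hfB).isCoboundedUnder_le hupper.isBoundedUnder_le
    refine prefixMean_le_mul_prefixMean hf (Nat.lt_pow_succ_log_self hK N).le ?_
    rw [pow_succ']
    exact Nat.mul_le_mul_left K (Nat.pow_log_le_self K hN)
  calc limsup (prefixMean f) atTop ≤ K * r := hle_upper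
    _ ≤ K * (liminf (prefixMean f) atTop * K) := by gcongr; exact (div_le_iff₀ hK0).1 hlower_le
    _ = K ^ 2 * liminf (prefixMean f) atTop := by ring

end PrefixMeans

section StateSequences

variable {Q : Type*}

/-- `s` is the sequence of states of an automaton reading base-`k` digits, most significant first:
appending a digit `b` to `n` yields a state depending only on `b` and the state of `n`. -/
def IsStateSeq (k : ℕ) (s : ℕ → Q) : Prop :=
  ∀ ⦃m n b : ℕ⦄, b < k → s m = s n → s (k * m + b) = s (k * n + b)

namespace IsStateSeq

variable {K L : ℕ} {s : ℕ → Q}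

theorem one (s : ℕ → Q) : IsStateSeq 1 s := by
  intro m n b hb h
  simpa [Nat.lt_one_iff.1 hb] using h

theorem mul (hK : IsStateSeq K s) (hL : IsStateSeq L s) : IsStateSeq (K * L) s := by
  intro m n b hb h
  have hL0 : 0 < L := Nat.pos_of_mul_pos_left (b.zero_le.trans_lt hb)
  have hsplit (j : ℕ) : K * L * j + b = L * (K * j + b / L) + b % L := by
    rw [mul_add, add_assoc, Nat.div_add_mod, mul_comm K, mul_assoc]
  rw [hsplit, hsplit]
  exact hL (Nat.mod_lt b hL0) (hK (Nat.div_lt_of_lt_mul (by rwa [mul_comm])) h)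

theorem pow (hK : IsStateSeq K s) (m : ℕ) : IsStateSeq (K ^ m) s := by
  induction m with
  | zero => exact pow_zero K ▸ one s
  | succ m ih => exact pow_succ K m ▸ ih.mul hK

theorem factorsThrough_blockAvg {𝕜 : Type*} [Field 𝕜] (hs : IsStateSeq K s) {f : ℕ → 𝕜}
    (hf : f.FactorsThrough s) : (blockAvg 𝕜 K f).FactorsThrough s := fun m n h => by
  simp only [blockAvg_apply]
  congr 1
  exact sum_congr rfl fun b hb => hf (hs (mem_range.1 hb) h)

end IsStateSeq

theorem exists_abs_le_of_factorsThrough [Finite Q] {s : ℕ → Q} {f : ℕ → ℝ}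
    (hf : f.FactorsThrough s) : ∃ B, ∀ n, |f n| ≤ B := by
  obtain ⟨g, rfl⟩ := (factorsThrough_iff f).1 hf
  obtain ⟨B, hB⟩ := (Set.finite_range fun q => |g q|).bddAbove
  exact ⟨B, fun n => hB ⟨s n, rfl⟩⟩

theorem IsAutomaticSeq.exists_isStateSeq {Δ : Type*} {k : ℕ} (hk : 2 ≤ k) {h : ℕ → Δ}
    (hh : IsAutomaticSeq k h) :
    ∃ (Q : Type) (_ : Finite Q) (s : ℕ → Q), IsStateSeq k s ∧ h.FactorsThrough s := by
  obtain ⟨Q, _, q₀, δ, τ, hτ⟩ := hh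
  -- `0` has no digits, so appending the digit `0` to it is not a transition: mark it separately.
  refine ⟨Bool × Q, inferInstance,
    fun n => (decide (n = 0), (Nat.digits k n).reverse.foldl δ q₀), ?_, ?_⟩
  · intro m n b hb hmn
    obtain ⟨hzero, hstate⟩ := Prod.ext_iff.1 hmn
    rw [decide_eq_decide] at hzero
    rcases eq_or_ne m 0 with rfl | hm
    · rw [hzero.1 rfl]
    · have hn : n ≠ 0 := mt hzero.2 hm
      have hdigits {j : ℕ} (hj : j ≠ 0) : Nat.digits k (k * j + b) = b :: Nat.digits k j := by
        rw [add_comm, Nat.digits_add k hk b j hb (Or.inr hj)]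
      simp_all
  · intro m n hmn
    rw [hτ, hτ]
    exact congrArg (τ ∘ Prod.snd) hmn

end StateSequences

section BlockStates

variable {Q : Type*} {K : ℕ} {s : ℕ → Q}

/-- The set of states of a state sequence occurring in its `n`-th block of length `K`; along powers
of a suitable `K` it does not depend on the block length, which lets long blocks be compared with
short ones. -/
def blockStates (K : ℕ) (s : ℕ → Q) (n : ℕ) : Set Q := (fun b => s (K * n + b)) '' Set.Iio K

theorem IsStateSeq.factorsThrough_blockStates (hs : IsStateSeq K s) :
    (blockStates K s).FactorsThrough s :=
  fun _ _ h => Set.image_congr fun _ hb => hs hb h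

theorem blockStates_mul (K L : ℕ) (s : ℕ → Q) (n : ℕ) :
    blockStates (K * L) s n = ⋃ b < K, blockStates L s (K * n + b) := by
  ext q
  simp only [blockStates, Set.mem_image, Set.mem_Iio, Set.mem_iUnion, exists_prop]
  constructor
  · rintro ⟨b, hb, rfl⟩
    have hL : 0 < L := Nat.pos_of_mul_pos_left (b.zero_le.trans_lt hb)
    refine ⟨b / L, Nat.div_lt_of_lt_mul (by rwa [mul_comm]), b % L, Nat.mod_lt b hL, ?_⟩
    rw [mul_add, add_assoc, Nat.div_add_mod, mul_left_comm, mul_assoc]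
  · rintro ⟨a, ha, b, hb, rfl⟩
    refine ⟨L * a + b, ?_, ?_⟩
    · nlinarith
    · rw [mul_add, ← add_assoc, ← mul_assoc, mul_comm K]

theorem IsStateSeq.exists_blockStates_pow_eq_add [Finite Q] (hs : IsStateSeq K s) :
    ∃ i p, 0 < p ∧ ∀ t, blockStates (K ^ (t + i)) s = blockStates (K ^ (t + i + p)) s := by
  choose G hG using fun m => (factorsThrough_iff _).1 (hs.pow m).factorsThrough_blockStates
  obtain ⟨i, j, hij, hGij⟩ := Set.finite_univ.exists_lt_map_eq_of_forall_mem (f := G) (by simp)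
  refine ⟨i, j - i, Nat.sub_pos_of_lt hij, fun t => funext fun n => ?_⟩
  rw [add_assoc, Nat.add_sub_cancel' hij.le, pow_add, pow_add, blockStates_mul, blockStates_mul,
    hG i, hG j, hGij]

theorem IsStateSeq.exists_pow_blockStates_pow_eq [Finite Q] (hs : IsStateSeq K s) :
    ∃ p > 0, ∃ j₀, ∀ j ≥ j₀, blockStates ((K ^ p) ^ j) s = blockStates ((K ^ p) ^ j₀) s := by
  obtain ⟨i, p, hp, hperiod⟩ := hs.exists_blockStates_pow_eq_add
  refine ⟨p, hp, i, fun j hj => ?_⟩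
  induction j, hj using Nat.le_induction with
  | base => rfl
  | succ j hj ih =>
    have hi : i ≤ p * j := hj.trans (Nat.le_mul_of_pos_left j hp)
    have hstep := hperiod (p * j - i)
    rw [Nat.sub_add_cancel hi] at hstep
    rw [← ih, ← pow_mul, ← pow_mul, mul_add_one, hstep]

end BlockStates

section Coboundaries

variable {Q : Type*} {s : ℕ → Q} {K j₀ : ℕ} {u : ℕ → ℝ} {B : ℝ}

theorem le_of_blockStates_eq {f : ℕ → ℝ} (hf : f.FactorsThrough s) {L n : ℕ}
    (hKL : blockStates L s n = blockStates K s n) {C : ℝ} (hC : ∀ b < K, C ≤ f (K * n + b)) :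
    ∀ b < L, C ≤ f (L * n + b) := by
  intro b hb
  obtain ⟨c, hc, hcb⟩ : s (L * n + b) ∈ blockStates K s n := hKL ▸ ⟨b, hb, rfl⟩
  exact hf hcb ▸ hC c hc

theorem sum_blockAvg_pow_sub (K i J : ℕ) (u : ℕ → ℝ) (n : ℕ) :
    ∑ j ∈ range J, blockAvg ℝ (K ^ (i + j)) (blockAvg ℝ K u - u) n =
      blockAvg ℝ (K ^ (i + J)) u n - blockAvg ℝ (K ^ i) u n := by
  simp only [map_sub, Pi.sub_apply, blockAvg_blockAvg, ← pow_succ]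
  exact sum_range_sub (fun j => blockAvg ℝ (K ^ (i + j)) u n) J

theorem blockAvg_coboundary (K L : ℕ) (u : ℕ → ℝ) :
    blockAvg ℝ L (blockAvg ℝ K u - u) = blockAvg ℝ K (blockAvg ℝ L u) - blockAvg ℝ L u := by
  rw [map_sub, blockAvg_blockAvg, blockAvg_blockAvg, mul_comm]

theorem abs_coboundary_le (hK : 0 < K) (hB : ∀ n, |u n| ≤ B) (n : ℕ) :
    |(blockAvg ℝ K u - u) n| ≤ 2 * B :=
  calc |(blockAvg ℝ K u - u) n| ≤ |blockAvg ℝ K u n| + |u n| := abs_sub _ _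
    _ ≤ 2 * B := by linarith [abs_blockAvg_le (n := n) hK hB, hB n]

theorem IsStateSeq.factorsThrough_coboundary (hs : IsStateSeq K s) (hu : u.FactorsThrough s) :
    (blockAvg ℝ K u - u).FactorsThrough s := fun m n h => by
  rw [Pi.sub_apply, Pi.sub_apply, hs.factorsThrough_blockAvg hu h, hu h]

/- A near-maximal average over one long block makes every term in that block near-maximal, hence
every term in the shorter blocks, which have the same states. But the averages of a coboundary
over these blocks telescope. -/
theorem IsStateSeq.mul_sub_le_of_sub_le_blockAvg_coboundary (hs : IsStateSeq K s) (hK : 0 < K)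
    (hstab : ∀ j ≥ j₀, blockStates (K ^ j) s = blockStates (K ^ j₀) s)
    (hu : u.FactorsThrough s) (hB : ∀ n, |u n| ≤ B) {C η : ℝ}
    (hC : ∀ n, (blockAvg ℝ K u - u) n ≤ C) {J n : ℕ}
    (hn : C - η ≤ blockAvg ℝ (K ^ (j₀ + J)) (blockAvg ℝ K u - u) n) :
    J * (C - (K ^ (j₀ + J) : ℕ) * η) ≤ 2 * B := by
  have hblock (j : ℕ) :
      C - (K ^ (j₀ + J) : ℕ) * η ≤ blockAvg ℝ (K ^ (j₀ + j)) (blockAvg ℝ K u - u) n := by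
    refine le_blockAvg (by positivity) (le_of_blockStates_eq (hs.factorsThrough_coboundary hu) ?_
      fun b hb => sub_mul_le_of_sub_le_blockAvg hC hn hb)
    rw [hstab _ (Nat.le_add_right _ _), hstab _ (Nat.le_add_right _ _)]
  have habs (i : ℕ) := abs_le.1 (abs_blockAvg_le (n := n) (pow_pos hK i) hB)
  calc (J : ℝ) * (C - (K ^ (j₀ + J) : ℕ) * η)
      ≤ ∑ j ∈ range J, blockAvg ℝ (K ^ (j₀ + j)) (blockAvg ℝ K u - u) n := by
        simpa using card_nsmul_le_sum (range J) _ _ fun j _ => hblock j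
    _ = blockAvg ℝ (K ^ (j₀ + J)) u n - blockAvg ℝ (K ^ j₀) u n := sum_blockAvg_pow_sub K j₀ J u n
    _ ≤ 2 * B := by linarith [(habs (j₀ + J)).2, (habs j₀).1]

theorem IsStateSeq.exists_blockAvg_coboundary_lt_sub (hs : IsStateSeq K s) (hK : 0 < K)
    (hstab : ∀ j ≥ j₀, blockStates (K ^ j) s = blockStates (K ^ j₀) s) {c : ℝ} (hc : 0 < c)
    (B : ℝ) :
    ∃ η > 0, ∃ i, ∀ u : ℕ → ℝ, u.FactorsThrough s → (∀ n, |u n| ≤ B) → ∀ C ≥ c,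
      (∀ n, (blockAvg ℝ K u - u) n ≤ C) →
        ∀ n, blockAvg ℝ (K ^ i) (blockAvg ℝ K u - u) n < C - η := by
  obtain ⟨J, hJ⟩ := exists_nat_gt (2 * B / (c / 2))
  have hK' : (0 : ℝ) < (K ^ (j₀ + J) : ℕ) := by positivity
  refine ⟨c / 2 / (K ^ (j₀ + J) : ℕ), by positivity, j₀ + J, fun u hu hB C hcC hC n => ?_⟩
  by_contra! hn
  have hbound := hs.mul_sub_le_of_sub_le_blockAvg_coboundary hK hstab hu hB hC hn
  rw [mul_div_cancel₀ _ hK'.ne'] at hbound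
  have hJ' : 2 * B < J * (c / 2) := (div_lt_iff₀ (by positivity)).1 hJ
  nlinarith [(J.cast_nonneg : (0 : ℝ) ≤ J)]

theorem IsStateSeq.exists_blockAvg_pow_coboundary_le (hs : IsStateSeq K s) (hK : 0 < K)
    (hstab : ∀ j ≥ j₀, blockStates (K ^ j) s = blockStates (K ^ j₀) s)
    (hu : u.FactorsThrough s) (hB : ∀ n, |u n| ≤ B) {ε : ℝ} (hε : 0 < ε) :
    ∃ m, ∀ n, blockAvg ℝ (K ^ m) (blockAvg ℝ K u - u) n ≤ ε := by
  set bounds : Set ℝ := {C | ∃ m, ∀ n, blockAvg ℝ (K ^ m) (blockAvg ℝ K u - u) n ≤ C}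
  have habs (m n : ℕ) : |blockAvg ℝ (K ^ m) (blockAvg ℝ K u - u) n| ≤ 2 * B :=
    abs_blockAvg_le (pow_pos hK m) (abs_coboundary_le hK hB)
  have hnonempty : bounds.Nonempty := ⟨2 * B, 0, fun n => (abs_le.1 (habs 0 n)).2⟩
  have hbelow : BddBelow bounds :=
    ⟨-(2 * B), fun C ⟨m, hm⟩ => (abs_le.1 (habs m 0)).1.trans (hm 0)⟩
  suffices hinf : sInf bounds ≤ 0 by
    obtain ⟨C, ⟨m, hm⟩, hC⟩ := exists_lt_of_csInf_lt hnonempty (hinf.trans_lt hε)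
    exact ⟨m, fun n => (hm n).trans hC.le⟩
  by_contra! hpos
  obtain ⟨η, hη, i, hdecrease⟩ := hs.exists_blockAvg_coboundary_lt_sub hK hstab hpos B
  obtain ⟨C, hCmem, hC⟩ := exists_lt_of_csInf_lt hnonempty (lt_add_of_pos_right _ hη)
  have hCinf : sInf bounds ≤ C := csInf_le hbelow hCmem
  obtain ⟨m, hm⟩ := hCmem
  have hmem : C - η ∈ bounds := ⟨i + m, fun n => by
    rw [pow_add, ← blockAvg_blockAvg, blockAvg_coboundary K (K ^ m)]
    rw [blockAvg_coboundary K (K ^ m)] at hm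
    exact (hdecrease _ ((hs.pow m).factorsThrough_blockAvg hu)
      (fun n => abs_blockAvg_le (pow_pos hK m) hB) C hCinf hm n).le⟩
  linarith [csInf_le hbelow hmem]

theorem IsStateSeq.exists_abs_blockAvg_pow_coboundary_le (hs : IsStateSeq K s) (hK : 0 < K)
    (hstab : ∀ j ≥ j₀, blockStates (K ^ j) s = blockStates (K ^ j₀) s)
    (hu : u.FactorsThrough s) (hB : ∀ n, |u n| ≤ B) {ε : ℝ} (hε : 0 < ε) :
    ∃ m, ∀ n, |blockAvg ℝ (K ^ m) (blockAvg ℝ K u - u) n| ≤ ε := by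
  obtain ⟨m₁, hm₁⟩ := hs.exists_blockAvg_pow_coboundary_le hK hstab hu hB hε
  obtain ⟨m₂, hm₂⟩ := hs.exists_blockAvg_pow_coboundary_le hK hstab (u := -u)
    (fun _ _ h => congrArg Neg.neg (hu h)) (by simpa using hB) hε
  have hneg : blockAvg ℝ K (-u) - -u = -(blockAvg ℝ K u - u) := by rw [map_neg]; abel
  rw [hneg] at hm₂
  refine ⟨m₁ + m₂, fun n => abs_le.2 ⟨?_, ?_⟩⟩
  · rw [pow_add, ← blockAvg_blockAvg]
    refine le_blockAvg (pow_pos hK _) fun b _ => neg_le.1 ?_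
    simpa only [map_neg, Pi.neg_apply] using hm₂ (K ^ m₁ * n + b)
  · rw [add_comm, pow_add, ← blockAvg_blockAvg]
    exact blockAvg_le (pow_pos hK _) fun b _ => hm₁ _

end Coboundaries

section FixedPointDecomposition

theorem exists_fixed_add_sub_of_mem {F E : Type*} [Field F] [AddCommGroup E] [Module F E]
    (T : E →ₗ[F] E) (V : Submodule F E) [FiniteDimensional F V] (hTV : ∀ v ∈ V, T v ∈ V)
    (hT : ∀ v ∈ V, T (T v - v) = T v - v → T v = v) {x : E} (hx : x ∈ V) :
    ∃ u ∈ V, ∃ v ∈ V, T u = u ∧ x = u + (T v - v) := by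
  let D : V →ₗ[F] V := T.restrict hTV - LinearMap.id
  have hdisjoint : Disjoint D.ker D.range := by
    rw [Submodule.disjoint_def]
    rintro _ hker ⟨v, rfl⟩
    have hfixed : T (T v - v) = T v - v := by
      simpa [D, sub_eq_zero] using congrArg Subtype.val (LinearMap.mem_ker.1 hker)
    simpa [D, Subtype.ext_iff, sub_eq_zero] using hT v v.2 hfixed
  have hfinrank := D.finrank_range_add_finrank_ker
  have htop : D.ker ⊔ D.range = ⊤ := Submodule.eq_top_of_disjoint _ _ (by omega) hdisjoint
  obtain ⟨u, hu, _, ⟨v, rfl⟩, huv⟩ := Submodule.mem_sup.1 (htop.ge (x := ⟨x, hx⟩) trivial)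
  refine ⟨u, u.2, v, v.2, ?_, ?_⟩
  · simpa [D, sub_eq_zero] using congrArg Subtype.val (LinearMap.mem_ker.1 hu)
  · simpa [D] using (congrArg Subtype.val huv).symm

variable {Q : Type*} {s : ℕ → Q} {K j₀ : ℕ}

theorem mem_range_funLeft_iff {f : ℕ → ℚ} :
    f ∈ (LinearMap.funLeft ℚ ℚ s).range ↔ f.FactorsThrough s := by
  rw [factorsThrough_iff, LinearMap.mem_range]
  exact exists_congr fun g => eq_comm

theorem coboundary_ratCast (K : ℕ) (v : ℕ → ℚ) :
    blockAvg ℝ K (fun n => (v n : ℝ)) - (fun n => (v n : ℝ)) =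
      fun n => (((blockAvg ℚ K v - v) n : ℚ) : ℝ) := by
  funext n
  simp [blockAvg_ratCast]

theorem IsStateSeq.blockAvg_eq_self_of_coboundary_fixed [Finite Q] (hs : IsStateSeq K s)
    (hK : 0 < K) (hstab : ∀ j ≥ j₀, blockStates (K ^ j) s = blockStates (K ^ j₀) s) {v : ℕ → ℚ}
    (hv : v.FactorsThrough s)
    (hfixed : blockAvg ℚ K (blockAvg ℚ K v - v) = blockAvg ℚ K v - v) : blockAvg ℚ K v = v := by
  have hvℝ : (fun n => (v n : ℝ)).FactorsThrough s := hv.comp_left _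
  obtain ⟨B, hB⟩ := exists_abs_le_of_factorsThrough hvℝ
  have hsmall (ε : ℝ) (hε : 0 < ε) : ∀ n, |(((blockAvg ℚ K v - v) n : ℚ) : ℝ)| ≤ ε := by
    obtain ⟨m, hm⟩ := hs.exists_abs_blockAvg_pow_coboundary_le hK hstab hvℝ hB hε
    rwa [coboundary_ratCast, blockAvg_ratCast, blockAvg_pow_eq_self hfixed] at hm
  refine sub_eq_zero.1 (funext fun n => ?_)
  have hzero := le_of_forall_pos_le_add fun ε hε => (hsmall ε hε n).trans_eq (zero_add ε).symm
  exact_mod_cast abs_nonpos_iff.1 hzero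

theorem IsStateSeq.exists_fixed_tendsto_prefixMean_sub [Finite Q] (hs : IsStateSeq K s)
    (hK : 0 < K) (hstab : ∀ j ≥ j₀, blockStates (K ^ j) s = blockStates (K ^ j₀) s) {x : ℕ → ℚ}
    (hx : x.FactorsThrough s) :
    ∃ ρ : ℕ → ℚ, ρ.FactorsThrough s ∧ blockAvg ℚ K ρ = ρ ∧
      Tendsto (prefixMean (fun n => (x n : ℝ)) - prefixMean (fun n => (ρ n : ℝ))) atTop (𝓝 0) := by
  obtain ⟨ρ, hρ, v, hv, hfixed, rfl⟩ := exists_fixed_add_sub_of_mem (blockAvg ℚ K)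
    (LinearMap.funLeft ℚ ℚ s).range
    (fun v hv => mem_range_funLeft_iff.2 (hs.factorsThrough_blockAvg (mem_range_funLeft_iff.1 hv)))
    (fun v hv => hs.blockAvg_eq_self_of_coboundary_fixed hK hstab (mem_range_funLeft_iff.1 hv))
    (mem_range_funLeft_iff.2 hx)
  refine ⟨ρ, mem_range_funLeft_iff.1 hρ, hfixed, ?_⟩
  have hvℝ : (fun n => (v n : ℝ)).FactorsThrough s := (mem_range_funLeft_iff.1 hv).comp_left _
  obtain ⟨B, hB⟩ := exists_abs_le_of_factorsThrough hvℝ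
  convert tendsto_prefixMean_zero_of_abs_blockAvg_le (abs_coboundary_le hK hB) fun ε hε => ?_
    using 1
  · funext N
    rw [Pi.sub_apply, ← prefixMean_sub, coboundary_ratCast]
    congr 1
    funext n
    simp
  · obtain ⟨m, hm⟩ := hs.exists_abs_blockAvg_pow_coboundary_le hK hstab hvℝ hB hε
    exact ⟨K ^ m, pow_pos hK m, hm⟩

end FixedPointDecomposition

section LimsupIsLUB

theorem isLUB_image_Ici_limsup {K : ℕ} (hK : 1 < K) {u v : ℕ → ℝ} (hu : ∀ n, u (K * n) = u n)
    (huv : Tendsto (v - u) atTop (𝓝 0)) (hv : IsBoundedUnder (· ≤ ·) atTop v)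
    (hv' : IsCoboundedUnder (· ≤ ·) atTop v) :
    IsLUB (u '' Set.Ici 1) (limsup v atTop) := by
  refine ⟨?_, fun C hC => ?_⟩
  · rintro _ ⟨n, hn, rfl⟩
    have hu_pow (m : ℕ) : u (K ^ m * n) = u n := by
      induction m with
      | zero => simp
      | succ m ih => rw [pow_succ', mul_assoc, hu, ih]
    have hatTop : Tendsto (fun m => K ^ m * n) atTop atTop :=
      (tendsto_pow_atTop_atTop_of_one_lt hK).atTop_mul_const' hn
    have hlim : Tendsto (v ∘ fun m => K ^ m * n) atTop (𝓝 (u n)) := by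
      simpa [comp_def, hu_pow] using (huv.comp hatTop).add_const (u n)
    rw [← hlim.limsup_eq]
    exact hatTop.limsup_comp_le_limsup hlim.isCoboundedUnder_le hv
  · have hlim : Tendsto (fun N => (v - u) N + C) atTop (𝓝 C) := by
      simpa using huv.add_const C
    rw [← hlim.limsup_eq]
    refine limsup_le_limsup ((eventually_ge_atTop 1).mono fun N hN => ?_) hv' hlim.isBoundedUnder_le
    linarith [hC (Set.mem_image_of_mem u hN), Pi.sub_apply v u N]

end LimsupIsLUB

section RationalLUB

variable {Q : Type*} {s : ℕ → Q} {K : ℕ} {f : ℕ → ℝ} {β : ℝ}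

/-- The amount by which the sum of the first `n` terms of `f` falls short of `β * n`; if `β` is the
supremum of the prefix means, it measures how far `n` is from attaining it. -/
noncomputable def deficit (f : ℕ → ℝ) (β : ℝ) (n : ℕ) : ℝ := β * n - ∑ j ∈ range n, f j

theorem deficit_mul (hK : K ≠ 0) (hfixed : blockAvg ℝ K f = f) (β : ℝ) (n : ℕ) :
    deficit f β (K * n) = K * deficit f β n := by
  rw [deficit, deficit, mul_comm K n, sum_range_mul_eq_mul_sum_blockAvg hK, hfixed]
  push_cast
  ring

theorem IsStateSeq.deficit_mul_add_sub (hs : IsStateSeq K s) (hK : K ≠ 0)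
    (hf : f.FactorsThrough s) (hfixed : blockAvg ℝ K f = f) (β : ℝ) {p q r : ℕ} (hpq : s p = s q)
    (hr : r ≤ K) :
    deficit f β (K * p + r) - deficit f β (K * q + r) = K * (deficit f β p - deficit f β q) := by
  have htail : ∑ c ∈ range r, f (K * p + c) = ∑ c ∈ range r, f (K * q + c) :=
    sum_congr rfl fun c hc => hf (hs ((mem_range.1 hc).trans_le hr) hpq)
  have hsplit (n : ℕ) : deficit f β (K * n + r) =
      K * deficit f β n + (β * r - ∑ c ∈ range r, f (K * n + c)) := by
    rw [← deficit_mul hK hfixed, deficit, deficit, sum_range_add]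
    push_cast
    ring
  rw [hsplit, hsplit, htail]
  ring

theorem deficit_nonneg_of_isLUB (hβ : IsLUB (prefixMean f '' Set.Ici 1) β) (n : ℕ) :
    0 ≤ deficit f β n := by
  rcases n.eq_zero_or_pos with rfl | hn
  · simp [deficit]
  · have hle := hβ.1 (Set.mem_image_of_mem _ hn)
    rw [prefixMean, div_le_iff₀ (by positivity)] at hle
    exact sub_nonneg.2 hle

theorem exists_deficit_le_mul_of_isLUB (hβ : IsLUB (prefixMean f '' Set.Ici 1) β) {ε : ℝ}
    (hε : 0 < ε) : ∃ N ≥ 1, deficit f β N ≤ ε * N := by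
  obtain ⟨_, ⟨N, hN, rfl⟩, hlt, -⟩ := hβ.exists_between (sub_lt_self β hε)
  have hN0 : (0 : ℝ) < N := by exact_mod_cast Set.mem_Ici.1 hN
  rw [prefixMean, lt_div_iff₀ hN0] at hlt
  exact ⟨N, hN, by rw [deficit]; linarith⟩

theorem natLog_pow_mul_div_pow_natLog (hK : 1 < K) {N : ℕ} (hN : N ≠ 0) (i : ℕ) :
    Nat.log K (K ^ i * N / K ^ Nat.log K N) = i := by
  refine Nat.log_eq_of_pow_le_of_lt_pow ?_ ?_
  · rw [Nat.le_div_iff_mul_le (by positivity)]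
    exact Nat.mul_le_mul_left _ (Nat.pow_log_le_self K hN)
  · rw [Nat.div_lt_iff_lt_mul (by positivity), pow_succ, mul_assoc, ← pow_succ']
    exact Nat.mul_lt_mul_of_pos_left (Nat.lt_pow_succ_log_self hK N) (by positivity)

theorem IsStateSeq.deficit_prefix_sub_le (hs : IsStateSeq K s) (hK : 1 < K)
    (hf : f.FactorsThrough s) (hfixed : blockAvg ℝ K f = f)
    (hβ : IsLUB (prefixMean f '' Set.Ici 1) β) {δ : ℝ} (hδ : 0 ≤ δ) {N : ℕ}
    (hN : deficit f β N ≤ δ * N) {i q : ℕ} (hq : s (K ^ i * N / K ^ Nat.log K N) = s q) :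
    deficit f β (K ^ i * N / K ^ Nat.log K N) - deficit f β q ≤ K ^ (i + 1) * δ := by
  set L := K ^ Nat.log K N with hL
  have hK0 : K ≠ 0 := by lia
  have hL0 : 0 < L := by positivity
  have hNL : (N : ℝ) ≤ L * K := by exact_mod_cast (Nat.lt_pow_succ_log_self hK N).le
  refine le_of_mul_le_mul_left ?_ (Nat.cast_pos.2 hL0)
  have hswap := (hs.pow (Nat.log K N)).deficit_mul_add_sub hL0.ne' hf
    (blockAvg_pow_eq_self hfixed _) β hq (Nat.mod_lt (K ^ i * N) hL0).le
  rw [← hL, Nat.div_add_mod, deficit_mul (pow_ne_zero i hK0) (blockAvg_pow_eq_self hfixed i)]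
    at hswap
  calc (L : ℝ) * (deficit f β (K ^ i * N / L) - deficit f β q)
      ≤ (K ^ i : ℕ) * deficit f β N := by
        rw [← hswap]
        exact sub_le_self _ (deficit_nonneg_of_isLUB hβ _)
    _ ≤ (K ^ i : ℕ) * (δ * (L * K)) := by gcongr; exact hN.trans (by gcongr)
    _ = L * (K ^ (i + 1) * δ) := by push_cast; ring

theorem IsStateSeq.exists_abs_deficit_sub_le [Finite Q] (hs : IsStateSeq K s) (hK : 1 < K)
    (hf : f.FactorsThrough s) (hfixed : blockAvg ℝ K f = f)
    (hβ : IsLUB (prefixMean f '' Set.Ici 1) β) {ε : ℝ} (hε : 0 < ε) :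
    ∃ pq ∈ (range (K ^ (Nat.card Q + 1))).offDiag,
      |deficit f β pq.1 - deficit f β pq.2| ≤ ε := by
  set M := K ^ (Nat.card Q + 1)
  obtain ⟨N, hN1, hN⟩ := exists_deficit_le_mul_of_isLUB hβ (ε := ε / M) (by positivity)
  have hlog := natLog_pow_mul_div_pow_natLog hK (Nat.one_le_iff_ne_zero.1 hN1)
  set P : ℕ → ℕ := fun i => K ^ i * N / K ^ Nat.log K N
  obtain ⟨i, j, hij, hstate⟩ : ∃ i j : Fin (Nat.card Q + 1), i ≠ j ∧ s (P i) = s (P j) := by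
    have := Fintype.ofFinite Q
    exact Fintype.exists_ne_map_eq_of_card_lt _ (by simp [Nat.card_eq_fintype_card])
  have hpow (i : Fin (Nat.card Q + 1)) : K ^ (i + 1 : ℕ) ≤ M :=
    Nat.pow_le_pow_right (by lia) (Nat.succ_le_succ (Nat.lt_succ_iff.1 i.2))
  have hlt (i : Fin (Nat.card Q + 1)) : P i < M :=
    (hlog i ▸ Nat.lt_pow_succ_log_self hK (P i)).trans_le (hpow i)
  have hle (i : Fin (Nat.card Q + 1)) {q : ℕ} (hq : s (P i) = s q) :
      deficit f β (P i) - deficit f β q ≤ ε :=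
    calc deficit f β (P i) - deficit f β q ≤ K ^ (i + 1 : ℕ) * (ε / M) :=
          hs.deficit_prefix_sub_le hK hf hfixed hβ (by positivity) hN hq
      _ ≤ M * (ε / M) := by gcongr; exact_mod_cast hpow i
      _ = ε := mul_div_cancel₀ _ (by positivity)
  refine ⟨(P i, P j), mem_offDiag.2 ⟨mem_range.2 (hlt i), mem_range.2 (hlt j), fun h => ?_⟩, ?_⟩
  · exact hij (Fin.ext (by rw [← hlog i, ← hlog j]; exact congrArg _ h))
  · exact abs_sub_le_iff.2 ⟨hle i hstate, hle j hstate.symm⟩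

theorem IsStateSeq.exists_eq_div_sub_of_isLUB [Finite Q] (hs : IsStateSeq K s) (hK : 1 < K)
    (hf : f.FactorsThrough s) (hfixed : blockAvg ℝ K f = f)
    (hβ : IsLUB (prefixMean f '' Set.Ici 1) β) :
    ∃ p q : ℕ, p ≠ q ∧ β = (∑ j ∈ range p, f j - ∑ j ∈ range q, f j) / ((p : ℝ) - q) := by
  let gaps := (range (K ^ (Nat.card Q + 1))).offDiag.image fun pq =>
    |deficit f β pq.1 - deficit f β pq.2|
  have hclosure : (0 : ℝ) ∈ closure (gaps : Set ℝ) := by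
    refine Metric.mem_closure_iff.2 fun ε hε => ?_
    obtain ⟨pq, hpq, hle⟩ := hs.exists_abs_deficit_sub_le hK hf hfixed hβ (half_pos hε)
    refine ⟨_, mem_coe.2 (mem_image_of_mem _ hpq), ?_⟩
    rw [dist_zero_left, Real.norm_eq_abs, abs_abs]
    linarith
  rw [gaps.finite_toSet.isClosed.closure_eq, mem_coe, mem_image] at hclosure
  obtain ⟨⟨p, q⟩, hpq, hgap⟩ := hclosure
  have hne : p ≠ q := (mem_offDiag.1 hpq).2.2
  refine ⟨p, q, hne, (eq_div_iff (sub_ne_zero.2 (Nat.cast_injective.ne hne))).2 ?_⟩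
  simp only [abs_eq_zero, deficit] at hgap
  linarith

end RationalLUB

section AutomaticSequences

variable {k : ℕ} {h : ℕ → ℚ}

theorem IsAutomaticSeq.comp {Δ Δ' : Type*} {h : ℕ → Δ} (hh : IsAutomaticSeq k h) (g : Δ → Δ') :
    IsAutomaticSeq k (g ∘ h) := by
  obtain ⟨Q, _, q₀, δ, τ, hτ⟩ := hh
  exact ⟨Q, inferInstance, q₀, δ, g ∘ τ, fun n => congrArg g (hτ n)⟩

theorem IsAutomaticSeq.exists_fixed_tendsto_prefixMean_sub (hh : IsAutomaticSeq k h)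
    (hk : 2 ≤ k) :
    ∃ K > 1, ∃ (Q : Type) (_ : Finite Q) (s : ℕ → Q) (ρ : ℕ → ℚ),
      IsStateSeq K s ∧ ρ.FactorsThrough s ∧
      blockAvg ℝ K (fun n => (ρ n : ℝ)) = (fun n => (ρ n : ℝ)) ∧
      Tendsto (prefixMean (fun n => (h n : ℝ)) - prefixMean (fun n => (ρ n : ℝ))) atTop (𝓝 0) := by
  obtain ⟨Q, _, s, hs, hhs⟩ := hh.exists_isStateSeq hk
  obtain ⟨p, hp, j₀, hstab⟩ := hs.exists_pow_blockStates_pow_eq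
  have hK : 1 < k ^ p := Nat.one_lt_pow hp.ne' hk
  obtain ⟨ρ, hρ, hfixed, hlim⟩ :=
    (hs.pow p).exists_fixed_tendsto_prefixMean_sub (by lia) hstab hhs
  exact ⟨k ^ p, hK, Q, inferInstance, s, ρ, hs.pow p, hρ, by rw [blockAvg_ratCast, hfixed], hlim⟩

theorem IsAutomaticSeq.exists_abs_le (hh : IsAutomaticSeq k h) : ∃ B : ℝ, ∀ n, |(h n : ℝ)| ≤ B := by
  obtain ⟨Q, _, q₀, δ, τ, hτ⟩ := hh
  refine exists_abs_le_of_factorsThrough (s := fun n => (Nat.digits k n).reverse.foldl δ q₀) ?_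
  intro m n hmn
  simp only [hτ]
  exact congrArg (fun q => (τ q : ℝ)) hmn

theorem IsAutomaticSeq.exists_limsup_prefixMean_eq_ratCast (hh : IsAutomaticSeq k h)
    (hk : 2 ≤ k) : ∃ b : ℚ, limsup (prefixMean fun n => (h n : ℝ)) atTop = b := by
  obtain ⟨B, hB⟩ := hh.exists_abs_le
  obtain ⟨K, hK, Q, _, s, ρ, hs, hρ, hfixed, hlim⟩ := hh.exists_fixed_tendsto_prefixMean_sub hk
  have hlub := isLUB_image_Ici_limsup hK (prefixMean_mul_left (by lia) hfixed) hlim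
    (isBoundedUnder_le_prefixMean hB) (isBoundedUnder_ge_prefixMean hB).isCoboundedUnder_le
  obtain ⟨p, q, -, hpq⟩ := hs.exists_eq_div_sub_of_isLUB hK (hρ.comp_left _) hfixed hlub
  exact ⟨(∑ j ∈ range p, ρ j - ∑ j ∈ range q, ρ j) / (p - q), by rw [hpq]; push_cast; rfl⟩

theorem IsAutomaticSeq.limsup_prefixMean_eq_zero (hh : IsAutomaticSeq k h) (hk : 2 ≤ k)
    (h0 : ∀ n, 0 ≤ h n) (hliminf : liminf (prefixMean fun n => (h n : ℝ)) atTop = 0) :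
    limsup (prefixMean fun n => (h n : ℝ)) atTop = 0 := by
  obtain ⟨B, hB⟩ := hh.exists_abs_le
  obtain ⟨K, hK, Q, _, s, ρ, -, -, hfixed, hlim⟩ := hh.exists_fixed_tendsto_prefixMean_sub hk
  have hfixed_pow (m : ℕ) :
      prefixMean (fun n => (ρ n : ℝ)) (K ^ m) = prefixMean (fun n => (ρ n : ℝ)) 1 := by
    simpa using prefixMean_mul_left (pow_ne_zero m (by lia)) (blockAvg_pow_eq_self hfixed m) 1
  have hpow : Tendsto (fun m => prefixMean (fun n => (h n : ℝ)) (K ^ m)) atTop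
      (𝓝 (prefixMean (fun n => (ρ n : ℝ)) 1)) := by
    simpa [comp_def, hfixed_pow] using
      (hlim.comp (tendsto_pow_atTop_atTop_of_one_lt hK)).add_const
        (prefixMean (fun n => (ρ n : ℝ)) 1)
  refine le_antisymm ?_ (hliminf.ge.trans (liminf_prefixMean_le_limsup hB))
  simpa [hliminf] using
    limsup_prefixMean_le_sq_mul_liminf (fun n => Rat.cast_nonneg.2 (h0 n)) hB hK hpow

theorem densities_of_automatic_set_general (hk : 2 ≤ k) (hh : IsAutomaticSeq k h)
    (h0 : ∀ n, 0 ≤ h n) (h1 : ∀ n, h n ≤ 1) {α β : ℝ}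
    (hα : α = liminf (prefixMean fun n => (h n : ℝ)) atTop)
    (hβ : β = limsup (prefixMean fun n => (h n : ℝ)) atTop) :
    (α = 0 ∧ β = 0) ∨ (α = 1 ∧ β = 1) ∨
      (∃ a b : ℚ, α = (a : ℝ) ∧ β = (b : ℝ) ∧ 0 < α ∧ α ≤ β ∧ β < 1) := by
  obtain ⟨B, hB⟩ := hh.exists_abs_le
  have hcompl : IsAutomaticSeq k fun n => 1 - h n := hh.comp (1 - ·)
  have hcompl0 (n : ℕ) : 0 ≤ 1 - h n := sub_nonneg.2 (h1 n)
  have hcast : (fun n => ((1 - h n : ℚ) : ℝ)) = 1 - fun n => (h n : ℝ) := by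
    funext n
    simp
  have hlimsup := limsup_prefixMean_one_sub hB
  have hliminf := liminf_prefixMean_one_sub hB
  rw [← hcast, ← hα] at hlimsup
  rw [← hcast, ← hβ] at hliminf
  have hα0 : 0 ≤ α := hα ▸ liminf_prefixMean_nonneg (fun n => Rat.cast_nonneg.2 (h0 n)) hB
  obtain ⟨B', hB'⟩ := hcompl.exists_abs_le
  have hβ1 : 0 ≤ 1 - β :=
    hliminf ▸ liminf_prefixMean_nonneg (fun n => Rat.cast_nonneg.2 (hcompl0 n)) hB'
  rcases hα0.eq_or_lt with hα0 | hα0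
  · exact Or.inl ⟨hα0.symm, hβ ▸ hh.limsup_prefixMean_eq_zero hk h0 (hα ▸ hα0.symm)⟩
  rcases hβ1.eq_or_lt with hβ1 | hβ1
  · have hα1 := hcompl.limsup_prefixMean_eq_zero hk hcompl0 (hliminf.trans hβ1.symm)
    exact Or.inr (Or.inl ⟨by linarith, by linarith⟩)
  obtain ⟨a, ha⟩ := hcompl.exists_limsup_prefixMean_eq_ratCast hk
  obtain ⟨b, hb⟩ := hh.exists_limsup_prefixMean_eq_ratCast hk
  refine Or.inr (Or.inr ⟨1 - a, b, ?_, hβ.trans hb, hα0, ?_, sub_pos.1 hβ1⟩)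
  · push_cast
    linarith
  · exact hα ▸ hβ ▸ liminf_prefixMean_le_limsup hB

end AutomaticSequences

theorem piCount_eq_sum_indicator (S : Set ℕ) (N : ℕ) :
    piCount S N = ∑ j ∈ range N, S.indicator (fun _ => 1) j := by
  classical
  rw [piCount, sum_indicator_eq_sum_filter, sum_const, smul_eq_mul, mul_one,
    ← Set.ncard_coe_finset]
  congr 1
  ext j
  simp [and_comm]

theorem prefixMean_indicator (S : Set ℕ) (N : ℕ) :
    prefixMean (fun n => (((S.indicator (fun _ => 1) n : ℕ) : ℚ) : ℝ)) N = piCount S N / N := by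
  rw [prefixMean, piCount_eq_sum_indicator]
  push_cast
  rfl

theorem densities_of_automatic_set
    (k : ℕ) (hk : 2 ≤ k) (S : Set ℕ) (hS : IsAutomaticSet k S)
    (α β : ℝ)
    (hα : α = Filter.atTop.liminf (fun N : ℕ => (piCount S N : ℝ) / N))
    (hβ : β = Filter.atTop.limsup (fun N : ℕ => (piCount S N : ℝ) / N)) :
    (α = 0 ∧ β = 0) ∨ (α = 1 ∧ β = 1) ∨
      (∃ a b : ℚ, α = (a : ℝ) ∧ β = (b : ℝ) ∧ 0 < α ∧ α ≤ β ∧ β < 1) := by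
  simp only [← prefixMean_indicator] at hα hβ
  exact densities_of_automatic_set_general hk (hS.comp Nat.cast) (fun n => Nat.cast_nonneg _)
    (fun n => by simpa using Set.indicator_le_self' (by simp) n) hα hβ
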